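/- Fix a sample S = (s_1,…,s_m). Let σ be an n×m random matrix whose entries σ_{j,i} are independent uniform Rademacher (±1) random variables. Then for all 0 < ε ≤ R̂(F,S), Pr_σ( R̂(F,S) ≥ R̂ⁿ_m(F,S,σ) + ε ) ≤ exp( − n m ε² / ( 4 ( ẑ(S) R̂(F,S) + σ̂²_F(S) ) ) ). -/

import Mathlib

/-!
Up to the factor `n m`, the Monte-Carlo average is a sum over the independent rows of `σ` of copies
of one random variable `W = sup_f Σ_i σ_i f(s_i)`, so the task is to bound the lower tail of `W`.
A function `f` nearly attaining the supremum at `σ` shows that reversing the `i`-th sign lowers `W`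
by at most about `2 |f(s_i)|`, for all `i` simultaneously. Hence the one-sided increments `D_i` of
`-W` satisfy `D_i ≤ 2 ẑ` and `Σ_i (D_i⁺ / 2)² ≤ m σ̂²`.

For such functions the logarithmic Sobolev inequality on the cube, applied to `exp (-u W / 2)`, and
`exp x - 1 ≤ x / (1 - u ẑ)` for `0 ≤ x ≤ u ẑ < 1`, give
`Ent (exp (-u W)) ≤ u² m σ̂² / (1 - u ẑ)² · E[exp (-u W)]`. Herbst's argument integrates this to the
sub-gamma bound `log E[exp (-t W)] ≤ -t E[W] + m σ̂² t² / (1 - t ẑ)`, and Bernstein's choice of `t`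
in Chernoff's inequality yields the denominator `2 (ẑ ε + 2 σ̂²)`, valid for every `ε > 0`; for
`ε ≤ R̂` it is at most `4 (ẑ R̂ + σ̂²)`.
-/

open MeasureTheory

noncomputable section

/-- Map a Boolean to a `±1` sign: `true ↦ 1`, `false ↦ -1`. -/
def sgnB (x : Bool) : ℝ := if x then 1 else -1

/-- The `n`-Monte-Carlo Empirical Rademacher Average
`R̂ⁿ_m(F,S,σ) = (1/n) Σ_j sup_{f∈F} (1/m) Σ_i σ_{j,i} f(s_i)`. -/
def mcera {X ι : Type*} (f : ι → X → ℝ) (n m : ℕ) (S : Fin m → X)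
    (σ : Fin n → Fin m → Bool) : ℝ :=
  (n : ℝ)⁻¹ * ∑ j : Fin n, ⨆ l : ι, (m : ℝ)⁻¹ * ∑ k : Fin m, sgnB (σ j k) * f l (S k)

/-- Uniform measure on `n × m` sign matrices: the entries are independent
uniform Rademacher (±1) random variables. -/
def radMeasure (n m : ℕ) : Measure (Fin n → Fin m → Bool) :=
  (PMF.uniformOfFintype (Fin n → Fin m → Bool)).toMeasure

/-- The Empirical Rademacher Average `R̂(F,S) = E_σ[R̂ⁿ_m(F,S,σ)]`. -/
def era {X ι : Type*} (f : ι → X → ℝ) (n m : ℕ) (S : Fin m → X) : ℝ :=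
  ∫ σ, mcera f n m S σ ∂(radMeasure n m)

/-- The Rademacher Complexity `R(F,m) = E_S[R̂(F,S)]`, `S` being `m` i.i.d. samples. -/
def rc {X ι : Type*} [MeasurableSpace X] (f : ι → X → ℝ) (n m : ℕ) (μ : Measure X) : ℝ :=
  ∫ S : Fin m → X, era f n m S ∂(Measure.pi fun _ : Fin m => μ)

/-- `ẑ(S) = sup_{f∈F, 1≤i≤m} |f(s_i)|`. -/
def zhat {X ι : Type*} (f : ι → X → ℝ) {m : ℕ} (S : Fin m → X) : ℝ :=
  ⨆ p : ι × Fin m, |f p.1 (S p.2)|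

/-- `ν̂_F(S) = (1/m) sup_{f∈F} Σ_i |f(s_i)|`. -/
def nuhat {X ι : Type*} (f : ι → X → ℝ) {m : ℕ} (S : Fin m → X) : ℝ :=
  (m : ℝ)⁻¹ * ⨆ l : ι, ∑ k : Fin m, |f l (S k)|

/-- The empirical wimpy variance `σ̂²_F(S) = (1/m) sup_{f∈F} Σ_i f(s_i)²`. -/
def sigma2hat {X ι : Type*} (f : ι → X → ℝ) {m : ℕ} (S : Fin m → X) : ℝ :=
  (m : ℝ)⁻¹ * ⨆ l : ι, ∑ k : Fin m, (f l (S k)) ^ 2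

/-- The wimpy variance `σ²_F = sup_{f∈F} E_μ[f²]`. -/
def wimpyVar {X ι : Type*} [MeasurableSpace X] (f : ι → X → ℝ) (μ : Measure X) : ℝ :=
  ⨆ l : ι, ∫ x, (f l x) ^ 2 ∂μ

/-- The positive supremum deviation `SD⁺(F,S) = sup_{f∈F} ((1/m)Σ_i f(s_i) - E_μ[f])`. -/
def sdPlus {X ι : Type*} [MeasurableSpace X] (f : ι → X → ℝ) (μ : Measure X)
    {m : ℕ} (S : Fin m → X) : ℝ :=
  ⨆ l : ι, ((m : ℝ)⁻¹ * ∑ k : Fin m, f l (S k) - ∫ x, f l x ∂μ)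

/-- The negative supremum deviation `SD⁻(F,S) = sup_{f∈F} (E_μ[f] - (1/m)Σ_i f(s_i))`. -/
def sdMinus {X ι : Type*} [MeasurableSpace X] (f : ι → X → ℝ) (μ : Measure X)
    {m : ℕ} (S : Fin m → X) : ℝ :=
  ⨆ l : ι, ((∫ x, f l x ∂μ) - (m : ℝ)⁻¹ * ∑ k : Fin m, f l (S k))

/-- `η_F = sup_{f∈F} E_μ[f] - a`. -/
def etaF {X ι : Type*} [MeasurableSpace X] (f : ι → X → ℝ) (μ : Measure X) (a : ℝ) : ℝ :=
  (⨆ l : ι, ∫ x, f l x ∂μ) - a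

/-- `γ_F = b - inf_{f∈F} E_μ[f]`. -/
def gammaF {X ι : Type*} [MeasurableSpace X] (f : ι → X → ℝ) (μ : Measure X) (b : ℝ) : ℝ :=
  b - ⨅ l : ι, ∫ x, f l x ∂μ

/-- `η̂_F(S) = sup_{f∈F} (1/m) Σ_i f(s_i) - a`. -/
def etahat {X ι : Type*} (f : ι → X → ℝ) {m : ℕ} (S : Fin m → X) (a : ℝ) : ℝ :=
  (⨆ l : ι, (m : ℝ)⁻¹ * ∑ k : Fin m, f l (S k)) - a

/-- `γ̂_F(S) = b - sup_{f∈F} (1/m) Σ_i f(s_i)`. -/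
def gammahat {X ι : Type*} (f : ι → X → ℝ) {m : ℕ} (S : Fin m → X) (b : ℝ) : ℝ :=
  b - ⨆ l : ι, (m : ℝ)⁻¹ * ∑ k : Fin m, f l (S k)

/-- `h(x) = (1+x) ln(1+x) - x`. -/
def hfun (x : ℝ) : ℝ := (1 + x) * Real.log (1 + x) - x

/-- `g(σ) = n m R̂ⁿ_m(F,S,σ) = Σ_j sup_{f∈F} Σ_i σ_{j,i} f(s_i)`. -/
def gup {X ι : Type*} (f : ι → X → ℝ) {n m : ℕ} (S : Fin m → X)
    (σ : Fin n → Fin m → Bool) : ℝ :=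
  ∑ j : Fin n, ⨆ l : ι, ∑ k : Fin m, sgnB (σ j k) * f l (S k)

/-- `g_{j,i}(σ)`: infimum over `σ'_{j,i} ∈ {-1,1}` of `g` evaluated at `σ` with its
`(j,i)` entry replaced by `σ'_{j,i}`. -/
def gji {X ι : Type*} (f : ι → X → ℝ) {n m : ℕ} (S : Fin m → X)
    (σ : Fin n → Fin m → Bool) (j : Fin n) (i : Fin m) : ℝ :=
  min (gup f S (Function.update σ j (Function.update (σ j) i true)))
      (gup f S (Function.update σ j (Function.update (σ j) i false)))

/-- `g(S) = m SD⁺(F,S) = sup_{f∈F} (Σ_i f(s_i) - m E_μ[f])`. -/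
def gSDp {X ι : Type*} [MeasurableSpace X] (f : ι → X → ℝ) (μ : Measure X)
    {m : ℕ} (S : Fin m → X) : ℝ :=
  ⨆ l : ι, (∑ k : Fin m, f l (S k) - m * ∫ x, f l x ∂μ)

/-- `g_i(S) = inf_{s'_i ∈ X} g(s_1,…,s_{i-1},s'_i,s_{i+1},…,s_m)` for `g = m SD⁺`. -/
def gSDpi {X ι : Type*} [MeasurableSpace X] (f : ι → X → ℝ) (μ : Measure X)
    {m : ℕ} (S : Fin m → X) (i : Fin m) : ℝ :=
  ⨅ s' : X, gSDp f μ (Function.update S i s')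

/-- `g(S) = m SD⁻(F,S) = sup_{f∈F} (m E_μ[f] - Σ_i f(s_i))`. -/
def gSDm {X ι : Type*} [MeasurableSpace X] (f : ι → X → ℝ) (μ : Measure X)
    {m : ℕ} (S : Fin m → X) : ℝ :=
  ⨆ l : ι, ((m : ℝ) * (∫ x, f l x ∂μ) - ∑ k : Fin m, f l (S k))

/-- `g_i(S) = inf_{s'_i ∈ X} g(s_1,…,s_{i-1},s'_i,s_{i+1},…,s_m)` for `g = m SD⁻`. -/
def gSDmi {X ι : Type*} [MeasurableSpace X] (f : ι → X → ℝ) (μ : Measure X)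
    {m : ℕ} (S : Fin m → X) (i : Fin m) : ℝ :=
  ⨅ s' : X, gSDm f μ (Function.update S i s')

/-- `g(S) = m σ̂²_F(S) = sup_{f∈F} Σ_i f(s_i)²`. -/
def gWv {X ι : Type*} (f : ι → X → ℝ) {m : ℕ} (S : Fin m → X) : ℝ :=
  ⨆ l : ι, ∑ k : Fin m, (f l (S k)) ^ 2

/-- `g_j(S) = sup_{f∈F} Σ_{i≠j} f(s_i)²`. -/
def gWvj {X ι : Type*} (f : ι → X → ℝ) {m : ℕ} (S : Fin m → X) (j : Fin m) : ℝ :=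
  ⨆ l : ι, ∑ k ∈ Finset.univ.erase j, (f l (S k)) ^ 2

open ProbabilityTheory Real
open scoped BigOperators

/-! ### The logarithmic Sobolev inequality on the discrete cube -/

theorem mul_tanh_sub_log_cosh_le (θ : ℝ) : θ * tanh θ - log (cosh θ) ≤ 1 - (cosh θ)⁻¹ := by
  wlog hθ : 0 ≤ θ generalizing θ
  · simpa using this (-θ) (by linarith)
  let D : ℝ → ℝ := fun x => 1 - (cosh x)⁻¹ - x * (sinh x / cosh x) + log (cosh x)
  have hasDerivAt_D (x : ℝ) : HasDerivAt D ((sinh x - x) / cosh x ^ 2) x := by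
    have hcosh : cosh x ≠ 0 := (cosh_pos x).ne'
    refine ((((hasDerivAt_cosh x).inv hcosh).const_sub 1).sub ((hasDerivAt_id x).mul
      ((hasDerivAt_sinh x).div (hasDerivAt_cosh x) hcosh)) |>.add
      ((hasDerivAt_cosh x).log hcosh)).congr_deriv ?_
    simp only [id, Pi.div_apply]
    field_simp
    rw [cosh_sq]
    ring
  have monotoneOn_D : MonotoneOn D (Set.Ici 0) := by
    refine monotoneOn_of_hasDerivWithinAt_nonneg (convex_Ici 0)
      (fun x _ => (hasDerivAt_D x).continuousAt.continuousWithinAt)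
      (fun x _ => (hasDerivAt_D x).hasDerivWithinAt) fun x hx => ?_
    rw [interior_Ici] at hx
    have : 0 ≤ sinh x - x := sub_nonneg.2 (self_le_sinh_iff.2 (le_of_lt hx))
    positivity
  have D_zero : D 0 = 0 := by simp [D]
  have D_nonneg : 0 ≤ D θ := D_zero ▸ monotoneOn_D Set.self_mem_Ici hθ hθ
  rw [tanh_eq_sinh_div_cosh]
  linarith

theorem two_point_entropy_le {A B : ℝ} (hA : 0 ≤ A) (hB : 0 ≤ B) :
    (A * log A + B * log B) / 2 - (A + B) / 2 * log ((A + B) / 2) ≤ (A + B) / 2 - √(A * B) := by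
  wlog hAB : A ≤ B generalizing A B
  · simpa only [add_comm, mul_comm] using this hB hA (le_of_not_ge hAB)
  rcases hB.eq_or_lt with rfl | hB
  · simp [le_antisymm hAB hA]
  rcases hA.eq_or_lt with rfl | hA
  · have : B / 2 * log 2 ≤ B / 2 * 1 := by gcongr; linarith [log_two_lt_d9]
    simp only [zero_mul, zero_add, sqrt_zero, sub_zero, log_div hB.ne' two_ne_zero]
    linarith
  -- The homogeneous coordinates `A = exp (c + θ)`, `B = exp (c - θ)` reduce to one variable.
  obtain ⟨c, θ, rfl, rfl⟩ : ∃ c θ, A = exp (c + θ) ∧ B = exp (c - θ) :=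
    ⟨(log A + log B) / 2, (log A - log B) / 2, by ring_nf; rw [exp_log hA],
      by ring_nf; rw [exp_log hB]⟩
  have half_add : (exp (c + θ) + exp (c - θ)) / 2 = exp c * cosh θ := by
    rw [cosh_eq, exp_add, sub_eq_add_neg c, exp_add]; ring
  have half_sub : (exp (c + θ) - exp (c - θ)) / 2 = exp c * sinh θ := by
    rw [sinh_eq, exp_add, sub_eq_add_neg c, exp_add]; ring
  have sqrt_mul : √(exp (c + θ) * exp (c - θ)) = exp c := by
    rw [← exp_add, ← exp_half]; ring_nf
  have hcosh : cosh θ ≠ 0 := (cosh_pos θ).ne'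
  rw [sqrt_mul, half_add, log_exp, log_exp, log_mul (exp_ne_zero c) hcosh, log_exp]
  calc (exp (c + θ) * (c + θ) + exp (c - θ) * (c - θ)) / 2
        - exp c * cosh θ * (c + log (cosh θ))
      = (exp (c + θ) + exp (c - θ)) / 2 * c + (exp (c + θ) - exp (c - θ)) / 2 * θ
        - exp c * cosh θ * (c + log (cosh θ)) := by ring
    _ = exp c * cosh θ * (θ * tanh θ - log (cosh θ)) := by
        rw [half_add, half_sub, tanh_eq_sinh_div_cosh]; field_simp; ring
    _ ≤ exp c * cosh θ * (1 - (cosh θ)⁻¹) := by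
        gcongr ?_ * ?_; exact mul_tanh_sub_log_cosh_le θ
    _ = exp c * cosh θ - exp c := by field_simp

theorem half_expect_sq_add_sub_sqrt_le {α : Type*} [Fintype α] (p q : α → ℝ) :
    ((𝔼 x, p x ^ 2) + 𝔼 x, q x ^ 2) / 2 - √((𝔼 x, p x ^ 2) * 𝔼 x, q x ^ 2) ≤
      (𝔼 x, (p x - q x) ^ 2) / 2 := by
  have cauchy_schwarz : 𝔼 x, p x * q x ≤ √((𝔼 x, p x ^ 2) * 𝔼 x, q x ^ 2) :=
    le_sqrt_of_sq_le (Finset.expect_mul_sq_le_sq_mul_sq _ _ _)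
  have expand : 𝔼 x, (p x - q x) ^ 2 =
      (𝔼 x, p x ^ 2) - 2 * (𝔼 x, p x * q x) + 𝔼 x, q x ^ 2 := by
    simp only [sub_sq, Finset.expect_add_distrib, Finset.expect_sub_distrib, Finset.mul_expect,
      mul_assoc]
  linarith

/-- The uniform probability measure on a nonempty finite type, in the form used by `radMeasure`. -/
abbrev uniformMeasure (α : Type*) [Fintype α] [Nonempty α] [MeasurableSpace α] : Measure α :=
  (PMF.uniformOfFintype α).toMeasure

theorem integral_uniformMeasure {α : Type*} [Fintype α] [Nonempty α] [MeasurableSpace α]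
    [MeasurableSingletonClass α] (F : α → ℝ) : ∫ x, F x ∂uniformMeasure α = 𝔼 x, F x := by
  simp only [PMF.integral_eq_sum, PMF.uniformOfFintype_apply, ENNReal.toReal_inv,
    ENNReal.toReal_natCast, smul_eq_mul, inv_mul_eq_div, Fintype.expect_eq_sum_div_card,
    Finset.sum_div]

/-- The entropy `Ent_μ(f) = μ[f log f] - μ[f] log μ[f]` of a nonnegative function. -/
def entropy {Ω : Type*} [MeasurableSpace Ω] (μ : Measure Ω) (f : Ω → ℝ) : ℝ :=
  (∫ ω, f ω * log (f ω) ∂μ) - (∫ ω, f ω ∂μ) * log (∫ ω, f ω ∂μ)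

theorem entropy_uniformMeasure {α : Type*} [Fintype α] [Nonempty α] [MeasurableSpace α]
    [MeasurableSingletonClass α] (f : α → ℝ) :
    entropy (uniformMeasure α) f = (𝔼 x, f x * log (f x)) - (𝔼 x, f x) * log (𝔼 x, f x) := by
  simp only [entropy, integral_uniformMeasure]

section Cube

variable {κ : Type*} [DecidableEq κ]

/-- The sign vector `τ` with its `i`-th sign reversed. -/
def flipSign (i : κ) (τ : κ → Bool) : κ → Bool :=
  Function.update τ i (!τ i)

theorem flipSign_involutive (i : κ) : Function.Involutive (flipSign i) :=
  fun τ => by simp [flipSign]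

theorem flipSign_comp_equiv {κ' : Type*} [DecidableEq κ'] (e : κ ≃ κ') (i : κ) (τ : κ → Bool) :
    flipSign (e i) (τ ∘ e.symm) = flipSign i τ ∘ e.symm := by
  simp [flipSign, Function.update_comp_equiv]

theorem flipSign_none (c : Bool) (τ : κ → Bool) :
    flipSign none (Equiv.piOptionEquivProd.symm (c, τ)) =
      Equiv.piOptionEquivProd.symm (!c, τ) := by
  ext (_ | j) <;> simp [flipSign, Equiv.piOptionEquivProd]

theorem flipSign_some (i : κ) (c : Bool) (τ : κ → Bool) :
    flipSign (some i) (Equiv.piOptionEquivProd.symm (c, τ)) =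
      Equiv.piOptionEquivProd.symm (c, flipSign i τ) := by
  ext (_ | j) <;> simp [flipSign, Equiv.piOptionEquivProd, Function.update_apply]

variable [Fintype κ]

theorem expect_flipSign (i : κ) (F : (κ → Bool) → ℝ) : 𝔼 τ, F (flipSign i τ) = 𝔼 τ, F τ :=
  Fintype.expect_equiv (flipSign_involutive i).toPerm _ _ fun _ => rfl

theorem expect_cube_option (F : (Option κ → Bool) → ℝ) :
    𝔼 τ, F τ = ((𝔼 τ : κ → Bool, F (Equiv.piOptionEquivProd.symm (true, τ))) +
      𝔼 τ : κ → Bool, F (Equiv.piOptionEquivProd.symm (false, τ))) / 2 := by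
  rw [Fintype.expect_equiv Equiv.piOptionEquivProd F
    (fun p => F (Equiv.piOptionEquivProd.symm p))
    (fun τ => by rw [Equiv.symm_apply_apply]), ← Finset.univ_product_univ,
    Finset.expect_product, Fintype.expect_eq_sum_div_card]
  simp

theorem log_sobolev_cube_option
    (ih : ∀ h : (κ → Bool) → ℝ, entropy (uniformMeasure (κ → Bool)) (fun τ => h τ ^ 2) ≤
      1 / 2 * ∑ i, 𝔼 τ, (h τ - h (flipSign i τ)) ^ 2) (h : (Option κ → Bool) → ℝ) :
    entropy (uniformMeasure (Option κ → Bool)) (fun τ => h τ ^ 2) ≤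
      1 / 2 * ∑ i, 𝔼 τ, (h τ - h (flipSign i τ)) ^ 2 := by
  let p (τ : κ → Bool) := h (Equiv.piOptionEquivProd.symm (true, τ))
  let q (τ : κ → Bool) := h (Equiv.piOptionEquivProd.symm (false, τ))
  have entropy_p := ih p
  have entropy_q := ih q
  have two_point := two_point_entropy_le (A := 𝔼 τ, p τ ^ 2) (B := 𝔼 τ, q τ ^ 2)
    (Finset.expect_nonneg fun _ _ => sq_nonneg _) (Finset.expect_nonneg fun _ _ => sq_nonneg _)
  have expect_sq_sub := half_expect_sq_add_sub_sqrt_le p q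
  have expect_sq_sub_comm : 𝔼 τ, (q τ - p τ) ^ 2 = 𝔼 τ, (p τ - q τ) ^ 2 := by
    simp only [sub_sq_comm]
  simp only [entropy_uniformMeasure, p, q] at *
  simp only [Fintype.sum_option, expect_cube_option, flipSign_none, flipSign_some, Bool.not_true,
    Bool.not_false, ← Finset.sum_div, Finset.sum_add_distrib, expect_sq_sub_comm]
  linarith

theorem log_sobolev_cube (h : (κ → Bool) → ℝ) :
    entropy (uniformMeasure (κ → Bool)) (fun τ => h τ ^ 2) ≤
      1 / 2 * ∑ i, 𝔼 τ, (h τ - h (flipSign i τ)) ^ 2 := by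
  revert h
  refine Fintype.induction_empty_option
    (P := fun κ _ => ∀ [DecidableEq κ] (h : (κ → Bool) → ℝ),
      entropy (uniformMeasure (κ → Bool)) (fun τ => h τ ^ 2) ≤
        1 / 2 * ∑ i, 𝔼 τ, (h τ - h (flipSign i τ)) ^ 2) ?of_equiv ?empty ?option κ
  case of_equiv =>
    intro α β _ e ih _ h
    let := Fintype.ofEquiv β e.symm
    have := e.decidableEq
    have reindex (F : (β → Bool) → ℝ) : 𝔼 τ, F τ = 𝔼 τ : α → Bool, F (τ ∘ e.symm) :=
      (Fintype.expect_equiv (e.arrowCongr (Equiv.refl Bool)) _ _ fun _ => rfl).symm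
    simpa only [entropy_uniformMeasure, reindex, ← e.sum_comp, flipSign_comp_equiv]
      using ih fun τ => h (τ ∘ e.symm)
  case empty => simp [entropy_uniformMeasure]
  case option =>
    intro α _ ih _ h
    classical
    convert log_sobolev_cube_option ih h

theorem expect_sq_sub_flipSign (i : κ) (h : (κ → Bool) → ℝ) :
    𝔼 τ, (h τ - h (flipSign i τ)) ^ 2 = 2 * 𝔼 τ, (h (flipSign i τ) - h τ)⁺ ^ 2 := by
  have sq_sub (x y : ℝ) : (x - y) ^ 2 = (x - y)⁺ ^ 2 + (y - x)⁺ ^ 2 := by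
    simp only [posPart_def]
    rcases le_total x y with hxy | hxy <;> simp [hxy, sub_sq_comm]
  have swap : 𝔼 τ, (h τ - h (flipSign i τ))⁺ ^ 2 = 𝔼 τ, (h (flipSign i τ) - h τ)⁺ ^ 2 := by
    rw [← expect_flipSign i]
    simp only [flipSign_involutive i _]
  simp only [sq_sub, Finset.expect_add_distrib, swap, two_mul]

theorem entropy_sq_le_sum_expect_posPart_sq (h : (κ → Bool) → ℝ) :
    entropy (uniformMeasure (κ → Bool)) (fun τ => h τ ^ 2) ≤
      𝔼 τ, ∑ i, (h (flipSign i τ) - h τ)⁺ ^ 2 := by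
  refine (log_sobolev_cube h).trans_eq ?_
  simp only [expect_sq_sub_flipSign, ← Finset.mul_sum, Finset.expect_sum_comm]
  ring

end Cube

/-! ### Herbst's argument -/

theorem le_mul_deriv_zero_add_of_mul_deriv_sub_le {ψ φ φ' : ℝ → ℝ} {t : ℝ} (ht : 0 < t)
    (hψ₀ : ψ 0 = 0) (hψ : ∀ u ∈ Set.Icc 0 t, DifferentiableAt ℝ ψ u)
    (hφ : ∀ u ∈ Set.Icc 0 t, HasDerivAt φ (φ' u) u)
    (h : ∀ u ∈ Set.Ioo 0 t, u * deriv ψ u - ψ u ≤ u ^ 2 * φ' u) :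
    ψ t ≤ t * (deriv ψ 0 + φ t - φ 0) := by
  have dslope_zero_of_pos (u : ℝ) (hu : 0 < u) : dslope ψ 0 u = ψ u / u := by
    rw [dslope_of_ne _ hu.ne', slope_def_field, hψ₀, sub_zero, sub_zero]
  have antitoneOn : AntitoneOn (fun u => dslope ψ 0 u - φ u) (Set.Icc 0 t) := by
    refine antitoneOn_of_hasDerivWithinAt_nonpos (convex_Icc 0 t)
      (f' := fun u => (u * deriv ψ u - ψ u) / u ^ 2 - φ' u) (fun u hu => ?_) ?_ ?_
    · refine ContinuousAt.continuousWithinAt (.sub ?_ (hφ u hu).continuousAt)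
      rcases hu.1.eq_or_lt with rfl | hu₀
      · exact continuousAt_dslope_same.2 (hψ 0 hu)
      · exact (continuousAt_dslope_of_ne hu₀.ne').2 (hψ u hu).continuousAt
    · rw [interior_Icc]
      intro u hu
      have hdiv := (hψ u (Set.Ioo_subset_Icc_self hu)).hasDerivAt.fun_div (hasDerivAt_id u)
        hu.1.ne'
      have heq : dslope ψ 0 =ᶠ[nhds u] fun u => ψ u / u :=
        Filter.eventually_of_mem (Ioi_mem_nhds hu.1) dslope_zero_of_pos
      refine HasDerivAt.hasDerivWithinAt (.sub ?_ (hφ u (Set.Ioo_subset_Icc_self hu)))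
      exact (hdiv.congr_of_eventuallyEq heq).congr_deriv (by simp [mul_comm])
    · rw [interior_Icc]
      intro u hu
      rw [sub_nonpos, div_le_iff₀' (pow_pos hu.1 2)]
      exact h u hu
  have hle : dslope ψ 0 t - φ t ≤ dslope ψ 0 0 - φ 0 :=
    antitoneOn (Set.left_mem_Icc.2 ht.le) (Set.right_mem_Icc.2 ht.le) ht.le
  rw [dslope_zero_of_pos t ht, dslope_same] at hle
  rw [← div_le_iff₀' ht]
  linarith

section Herbst

variable {Ω : Type*} [MeasurableSpace Ω] {μ : Measure Ω} [IsProbabilityMeasure μ] {X : Ω → ℝ}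

theorem entropy_exp {u : ℝ} (hu : u ∈ interior (integrableExpSet X μ)) :
    entropy μ (fun ω => exp (u * X ω)) =
      mgf X μ u * (u * deriv (cgf X μ) u - cgf X μ u) := by
  have hmgf : mgf X μ u ≠ 0 := (mgf_pos (interior_subset (s := integrableExpSet X μ) hu)).ne'
  have integral_mul_log : ∫ ω, exp (u * X ω) * log (exp (u * X ω)) ∂μ =
      u * ∫ ω, X ω * exp (u * X ω) ∂μ := by
    rw [← integral_const_mul]
    congr with ω
    rw [log_exp]
    ring
  rw [entropy, integral_mul_log, deriv_cgf hu]
  simp only [cgf, mgf] at hmgf ⊢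
  field_simp

theorem cgf_le_of_entropy_exp_le {φ φ' : ℝ → ℝ} {t : ℝ} (ht : 0 < t)
    (hX : ∀ u ∈ Set.Icc 0 t, u ∈ interior (integrableExpSet X μ))
    (hφ : ∀ u ∈ Set.Icc 0 t, HasDerivAt φ (φ' u) u)
    (h : ∀ u ∈ Set.Ioo 0 t,
      entropy μ (fun ω => exp (u * X ω)) ≤ u ^ 2 * φ' u * mgf X μ u) :
    cgf X μ t ≤ t * (μ[X] + φ t - φ 0) := by
  have deriv_zero : deriv (cgf X μ) 0 = μ[X] := by
    simp [deriv_cgf_zero (hX 0 (Set.left_mem_Icc.2 ht.le))]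
  rw [← deriv_zero]
  refine le_mul_deriv_zero_add_of_mul_deriv_sub_le ht cgf_zero
    (fun u hu => (analyticAt_cgf (hX u hu)).differentiableAt) hφ fun u hu => ?_
  have hu' := hX u (Set.Ioo_subset_Icc_self hu)
  have hmgf : 0 < mgf X μ u := mgf_pos (interior_subset (s := integrableExpSet X μ) hu')
  have hent := h u hu
  rw [entropy_exp hu', mul_comm (mgf X μ u)] at hent
  exact le_of_mul_le_mul_right hent hmgf

end Herbst

/-! ### Sub-gamma variables -/

/-- `X` is sub-gamma on the right tail under `μ`, with variance factor `v` and scale `c`: up to the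
linear term, its cumulant generating function is at most `v t² / (2 (1 - c t))` when `c t < 1`.
As `cgf` is junk where `exp (t X)` is not integrable, integrability is part of the definition. -/
def IsSubGamma {Ω : Type*} [MeasurableSpace Ω] (X : Ω → ℝ) (v c : ℝ) (μ : Measure Ω) : Prop :=
  ∀ t, 0 < t → c * t < 1 →
    Integrable (fun ω => exp (t * X ω)) μ ∧
      cgf X μ t ≤ t * μ[X] + v * t ^ 2 / (2 * (1 - c * t))

section IndependentCopies

variable {Ω : Type*} [MeasurableSpace Ω] {ν : Measure Ω} [IsProbabilityMeasure ν] {X : Ω → ℝ}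

theorem measureReal_le_sum_eval_le_exp_cgf {ι : Type*} [Fintype ι] (hX : Measurable X) {t : ℝ}
    (ht : 0 ≤ t) (integrable_exp : Integrable (fun ω => exp (t * X ω)) ν) (c : ℝ) :
    (Measure.pi fun _ : ι => ν).real {ω | c ≤ ∑ j, X (ω j)} ≤
      exp (-t * c + Fintype.card ι * cgf X ν t) := by
  have cgf_eval (j : ι) : cgf (fun ω => X (ω j)) (Measure.pi fun _ : ι => ν) t = cgf X ν t :=
    congrArg log <| integral_comp_eval (μ := fun _ : ι => ν) (i := j)
      (f := fun x => exp (t * X x)) integrable_exp.aestronglyMeasurable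
  have indep : iIndepFun (fun j (ω : ι → Ω) => X (ω j)) (Measure.pi fun _ => ν) :=
    iIndepFun_pi fun _ => hX.aemeasurable
  have measurable_eval (j : ι) : Measurable fun ω : ι → Ω => X (ω j) :=
    hX.comp (measurable_pi_apply j)
  have integrable_eval (j : ι) :
      Integrable (fun ω => exp (t * X (ω j))) (Measure.pi fun _ : ι => ν) :=
    integrable_comp_eval (μ := fun _ : ι => ν) (f := fun x => exp (t * X x)) integrable_exp
  have chernoff := measure_ge_le_exp_cgf c ht
    (indep.integrable_exp_mul_sum measurable_eval (s := .univ) fun j _ => integrable_eval j)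
  rw [indep.cgf_sum measurable_eval fun j _ => integrable_eval j] at chernoff
  simpa only [Finset.sum_apply, cgf_eval, Finset.sum_const, Finset.card_univ, nsmul_eq_mul]
    using chernoff

theorem IsSubGamma.measureReal_le_sum_eval_le {ι : Type*} [Fintype ι] {v c : ℝ}
    (h : IsSubGamma X v c ν) (hX : Measurable X) (hv : 0 < v) (hc : 0 ≤ c) {ε : ℝ} (hε : 0 < ε) :
    (Measure.pi fun _ : ι => ν).real {ω | Fintype.card ι * (ν[X] + ε) ≤ ∑ j, X (ω j)} ≤
      exp (-(Fintype.card ι * ε ^ 2) / (2 * (v + c * ε))) := by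
  -- Bernstein's choice of the exponent, for which `1 - c t = v / (v + c ε)`.
  let t := ε / (v + c * ε)
  have : 0 < v + c * ε := by positivity
  have one_sub : 1 - c * t = v / (v + c * ε) := by simp only [t]; field_simp; ring
  have one_sub_pos : 0 < 1 - c * t := by rw [one_sub]; positivity
  have ht : 0 < t := by positivity
  obtain ⟨integrable_exp, hcgf⟩ := h t ht (sub_pos.1 one_sub_pos)
  refine (measureReal_le_sum_eval_le_exp_cgf hX ht.le integrable_exp _).trans (exp_le_exp.2 ?_)
  calc -t * (Fintype.card ι * (ν[X] + ε)) + Fintype.card ι * cgf X ν t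
      ≤ -t * (Fintype.card ι * (ν[X] + ε)) +
          Fintype.card ι * (t * ν[X] + v * t ^ 2 / (2 * (1 - c * t))) := by gcongr
    _ = -(Fintype.card ι * ε ^ 2) / (2 * (v + c * ε)) := by
        rw [one_sub]; simp only [t]; field_simp; ring

end IndependentCopies

/-! ### Functions on the cube with small increments -/

theorem posPart_exp_sub_exp_le {a b x : ℝ} (hab : a - b ≤ x) (hx : x < 1) :
    (exp a - exp b)⁺ ≤ exp b * ((a - b)⁺ / (1 - x)) := by
  rcases le_total a b with hle | hle
  · simp [posPart_eq_zero.2 (sub_nonpos.2 hle), posPart_eq_zero.2 (sub_nonpos.2 (exp_le_exp.2 hle))]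
  have hnonneg : 0 ≤ a - b := sub_nonneg.2 hle
  have exp_sub_one_le : exp (a - b) - 1 ≤ (a - b) / (1 - x) :=
    calc exp (a - b) - 1 ≤ 1 / (1 - (a - b)) - 1 := by
          gcongr; exact exp_bound_div_one_sub_of_interval hnonneg (hab.trans_lt hx)
      _ = (a - b) / (1 - (a - b)) := by
          have : 1 - (a - b) ≠ 0 := by linarith
          field_simp; ring
      _ ≤ (a - b) / (1 - x) := by gcongr
  rw [posPart_of_nonneg (sub_nonneg.2 (exp_le_exp.2 hle)), posPart_of_nonneg hnonneg]
  calc exp a - exp b = exp b * (exp (a - b) - 1) := by rw [exp_sub]; field_simp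
    _ ≤ exp b * ((a - b) / (1 - x)) := by gcongr

section Increments

variable {κ : Type*} [DecidableEq κ] [Fintype κ] {g : (κ → Bool) → ℝ} {z s : ℝ}

theorem sum_posPart_exp_flipSign_sq_le {u : ℝ} (hu : 0 ≤ u) (hzu : z * u < 1) {τ : κ → Bool}
    (hz : ∀ i, g (flipSign i τ) - g τ ≤ 2 * z)
    (hs : ∑ i, ((g (flipSign i τ) - g τ) / 2)⁺ ^ 2 ≤ s) :
    ∑ i, (exp (u * g (flipSign i τ) / 2) - exp (u * g τ / 2))⁺ ^ 2 ≤
      u ^ 2 * (s / (1 - z * u) ^ 2) * exp (u * g τ) := by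
  have : 0 < 1 - z * u := by linarith
  have exp_half_sq : exp (u * g τ / 2) ^ 2 = exp (u * g τ) := by
    rw [← exp_nat_mul]; congr 1; push_cast; ring
  have half_diff (i : κ) : u * g (flipSign i τ) / 2 - u * g τ / 2 =
      u * ((g (flipSign i τ) - g τ) / 2) := by ring
  have posPart_le (i : κ) : (exp (u * g (flipSign i τ) / 2) - exp (u * g τ / 2))⁺ ≤
      exp (u * g τ / 2) * (u * ((g (flipSign i τ) - g τ) / 2)⁺ / (1 - z * u)) := by
    have hle : u * g (flipSign i τ) / 2 - u * g τ / 2 ≤ z * u := by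
      rw [half_diff, mul_comm z]
      gcongr
      linarith [hz i]
    refine (posPart_exp_sub_exp_le hle hzu).trans_eq ?_
    rw [half_diff, posPart_def, posPart_def, mul_max_of_nonneg _ _ hu, mul_zero]
  calc ∑ i, (exp (u * g (flipSign i τ) / 2) - exp (u * g τ / 2))⁺ ^ 2
      ≤ ∑ i, (exp (u * g τ / 2) * (u * ((g (flipSign i τ) - g τ) / 2)⁺ / (1 - z * u))) ^ 2 := by
        exact Finset.sum_le_sum fun i _ => pow_le_pow_left₀ (posPart_nonneg _) (posPart_le i) 2
    _ = u ^ 2 * ((∑ i, ((g (flipSign i τ) - g τ) / 2)⁺ ^ 2) / (1 - z * u) ^ 2) *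
          exp (u * g τ) := by
        rw [← exp_half_sq, Finset.sum_div, Finset.mul_sum, Finset.sum_mul]
        congr with i
        simp only [mul_pow, div_pow]
        ring
    _ ≤ u ^ 2 * (s / (1 - z * u) ^ 2) * exp (u * g τ) := by gcongr

theorem isSubGamma_of_flipSign_le (hz : ∀ τ i, g (flipSign i τ) - g τ ≤ 2 * z)
    (hs : ∀ τ, ∑ i, ((g (flipSign i τ) - g τ) / 2)⁺ ^ 2 ≤ s) :
    IsSubGamma g (2 * s) z (uniformMeasure (κ → Bool)) := by
  refine fun t ht hzt => ⟨.of_finite, ?_⟩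
  have one_sub_pos {u : ℝ} (hu : u ∈ Set.Icc 0 t) : 0 < 1 - z * u := by
    rcases le_total z 0 with hz₀ | hz₀
    · linarith [mul_nonpos_of_nonpos_of_nonneg hz₀ hu.1]
    · linarith [mul_le_mul_of_nonneg_left hu.2 hz₀]
  have hφ (u : ℝ) (hu : u ∈ Set.Icc 0 t) :
      HasDerivAt (fun u => s * u / (1 - z * u)) (s / (1 - z * u) ^ 2) u := by
    refine (((hasDerivAt_id u).const_mul s).fun_div (((hasDerivAt_id u).const_mul z).const_sub 1)
      (one_sub_pos hu).ne').congr_deriv ?_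
    simp only [id]
    ring
  have hent (u : ℝ) (hu : u ∈ Set.Ioo 0 t) :
      entropy (uniformMeasure (κ → Bool)) (fun τ => exp (u * g τ)) ≤
        u ^ 2 * (s / (1 - z * u) ^ 2) * mgf g (uniformMeasure (κ → Bool)) u := by
    have hzu : z * u < 1 := sub_pos.1 (one_sub_pos (Set.Ioo_subset_Icc_self hu))
    calc entropy (uniformMeasure (κ → Bool)) (fun τ => exp (u * g τ))
        = entropy (uniformMeasure (κ → Bool)) (fun τ => exp (u * g τ / 2) ^ 2) := by
          simp only [← exp_nat_mul, Nat.cast_ofNat, mul_div_cancel₀ _ (two_ne_zero' ℝ)]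
      _ ≤ 𝔼 τ, ∑ i, (exp (u * g (flipSign i τ) / 2) - exp (u * g τ / 2))⁺ ^ 2 :=
          entropy_sq_le_sum_expect_posPart_sq _
      _ ≤ 𝔼 τ, u ^ 2 * (s / (1 - z * u) ^ 2) * exp (u * g τ) :=
          Finset.expect_le_expect fun τ _ =>
            sum_posPart_exp_flipSign_sq_le hu.1.le hzu (hz τ) (hs τ)
      _ = u ^ 2 * (s / (1 - z * u) ^ 2) * mgf g (uniformMeasure (κ → Bool)) u := by
          rw [← Finset.mul_expect, mgf, integral_uniformMeasure]
  have mem_interior (u : ℝ) : u ∈ interior (integrableExpSet g (uniformMeasure (κ → Bool))) := by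
    rw [Set.eq_univ_of_forall (s := integrableExpSet _ _) fun _ => Integrable.of_finite,
      interior_univ]
    trivial
  refine (cgf_le_of_entropy_exp_le ht (fun u _ => mem_interior u) hφ hent).trans_eq ?_
  have := (one_sub_pos (Set.right_mem_Icc.2 ht.le)).ne'
  field_simp
  ring

end Increments

/-! ### Rademacher suprema -/

section RademacherSup

variable {ι κ : Type*} [Fintype κ]

/-- The supremum `sup_l Σ_k σ_k a_{l,k}` of the sign process with coefficients `a`, so that
`n m R̂ⁿ_m(F,S,σ)` is the sum of the Rademacher suprema of the rows of `σ`. -/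
def rademacherSup (a : ι → κ → ℝ) (τ : κ → Bool) : ℝ :=
  ⨆ l, ∑ k, sgnB (τ k) * a l k

variable {a : ι → κ → ℝ} {z s : ℝ}

theorem abs_sgnB_mul (c : Bool) (x : ℝ) : |sgnB c * x| = |x| := by
  cases c <;> simp [sgnB]

theorem bddAbove_range_sum_sgnB_mul (hz : ∀ l k, |a l k| ≤ z) (τ : κ → Bool) :
    BddAbove (Set.range fun l => ∑ k, sgnB (τ k) * a l k) := by
  refine ⟨∑ _k : κ, z, Set.forall_mem_range.2 fun l => Finset.sum_le_sum fun k _ => ?_⟩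
  exact (le_abs_self _).trans (abs_sgnB_mul (τ k) (a l k) ▸ hz l k)

variable [DecidableEq κ]

theorem sum_sgnB_mul_sub_flipSign_le (x : κ → ℝ) (τ : κ → Bool) (i : κ) :
    ∑ k, sgnB (τ k) * x k - ∑ k, sgnB (flipSign i τ k) * x k ≤ 2 * |x i| := by
  have sum_sub : ∑ k, sgnB (τ k) * x k - ∑ k, sgnB (flipSign i τ k) * x k =
      sgnB (τ i) * x i - sgnB (flipSign i τ i) * x i := by
    rw [← Finset.sum_sub_distrib]
    refine Finset.sum_eq_single i (fun k _ hk => ?_) (by simp)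
    simp [flipSign, Function.update_of_ne hk]
  have abs_sub_le :=
    (le_abs_self _).trans (abs_sub (sgnB (τ i) * x i) (sgnB (flipSign i τ i) * x i))
  rw [abs_sgnB_mul, abs_sgnB_mul] at abs_sub_le
  linarith

variable [Nonempty ι]

-- The index `l` does not depend on `i`: one near-maximizer at `τ` serves all flips at once.
theorem exists_rademacherSup_sub_flipSign_le (hz : ∀ l k, |a l k| ≤ z) (τ : κ → Bool) {δ : ℝ}
    (hδ : 0 < δ) :
    ∃ l, ∀ i, (rademacherSup a τ - rademacherSup a (flipSign i τ)) / 2 ≤ |a l i| + δ := by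
  obtain ⟨l, hl⟩ := exists_lt_of_lt_ciSup (sub_lt_self (rademacherSup a τ) hδ)
  refine ⟨l, fun i => ?_⟩
  have le_sup : ∑ k, sgnB (flipSign i τ k) * a l k ≤ rademacherSup a (flipSign i τ) :=
    le_ciSup (bddAbove_range_sum_sgnB_mul hz (flipSign i τ)) l
  linarith [sum_sgnB_mul_sub_flipSign_le (a l) τ i]

theorem rademacherSup_sub_flipSign_le (hz : ∀ l k, |a l k| ≤ z) (τ : κ → Bool) (i : κ) :
    rademacherSup a τ - rademacherSup a (flipSign i τ) ≤ 2 * z := by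
  refine le_of_forall_pos_le_add fun δ hδ => ?_
  obtain ⟨l, hl⟩ := exists_rademacherSup_sub_flipSign_le hz τ (half_pos hδ)
  linarith [hl i, hz l i]

theorem sum_posPart_rademacherSup_sub_flipSign_sq_le (hz : ∀ l k, |a l k| ≤ z)
    (hs : ∀ l, ∑ k, a l k ^ 2 ≤ s) (τ : κ → Bool) :
    ∑ i, ((rademacherSup a τ - rademacherSup a (flipSign i τ)) / 2)⁺ ^ 2 ≤ s := by
  have tendsto_slack : Filter.Tendsto (fun δ : ℝ => s + Fintype.card κ * (2 * δ * z + δ ^ 2))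
      (nhdsWithin 0 (Set.Ioi 0)) (nhds s) :=
    ((by fun_prop : Continuous _).tendsto' 0 s (by simp)).mono_left nhdsWithin_le_nhds
  refine ge_of_tendsto tendsto_slack (eventually_mem_nhdsWithin.mono fun δ (hδ : 0 < δ) => ?_)
  obtain ⟨l, hl⟩ := exists_rademacherSup_sub_flipSign_le hz τ hδ
  calc ∑ i, ((rademacherSup a τ - rademacherSup a (flipSign i τ)) / 2)⁺ ^ 2
      ≤ ∑ i, (|a l i| + δ) ^ 2 := Finset.sum_le_sum fun i _ =>
        pow_le_pow_left₀ (posPart_nonneg _) (max_le (hl i) (by positivity)) 2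
    _ ≤ ∑ i, (a l i ^ 2 + (2 * δ * z + δ ^ 2)) := by
        refine Finset.sum_le_sum fun i _ => ?_
        rw [add_sq, sq_abs]
        linarith [mul_le_mul_of_nonneg_right (hz l i) hδ.le]
    _ ≤ s + Fintype.card κ * (2 * δ * z + δ ^ 2) := by
        rw [Finset.sum_add_distrib, Finset.sum_const, Finset.card_univ, nsmul_eq_mul]
        linarith [hs l]

theorem isSubGamma_neg_rademacherSup (hz : ∀ l k, |a l k| ≤ z)
    (hs : ∀ l, ∑ k, a l k ^ 2 ≤ s) :
    IsSubGamma (fun τ => -rademacherSup a τ) (2 * s) z (uniformMeasure (κ → Bool)) := by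
  refine isSubGamma_of_flipSign_le (fun τ i => ?_) fun τ => ?_ <;> simp only [neg_sub_neg]
  · exact rademacherSup_sub_flipSign_le hz τ i
  · exact sum_posPart_rademacherSup_sub_flipSign_sq_le hz hs τ

end RademacherSup

/-! ### Empirical Rademacher averages -/

theorem radMeasure_eq_pi (n m : ℕ) :
    radMeasure n m = Measure.pi fun _ : Fin n => uniformMeasure (Fin m → Bool) := by
  refine Measure.ext_of_singleton fun σ => ?_
  rw [Measure.pi_singleton, radMeasure]
  simp [ENNReal.inv_pow]

section SampleQuantities

variable {X ι : Type*} (f : ι → X → ℝ) {n m : ℕ} (S : Fin m → X)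

theorem mcera_eq_sum_rademacherSup (σ : Fin n → Fin m → Bool) :
    mcera f n m S σ =
      (n : ℝ)⁻¹ * ((m : ℝ)⁻¹ * ∑ j, rademacherSup (fun l k => f l (S k)) (σ j)) := by
  simp only [mcera, rademacherSup, Finset.mul_sum,
    Real.mul_iSup_of_nonneg (inv_nonneg.2 m.cast_nonneg)]

theorem era_eq_integral_rademacherSup (hn : 0 < n) :
    era f n m S = (m : ℝ)⁻¹ *
      ∫ τ, rademacherSup (fun l k => f l (S k)) τ ∂uniformMeasure (Fin m → Bool) := by
  have integral_row (j : Fin n) :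
      ∫ σ, rademacherSup (fun l k => f l (S k)) (σ j) ∂radMeasure n m =
        ∫ τ, rademacherSup (fun l k => f l (S k)) τ ∂uniformMeasure (Fin m → Bool) := by
    rw [radMeasure_eq_pi, integral_comp_eval .of_discrete]
  have hn' : (n : ℝ) ≠ 0 := by positivity
  have : IsFiniteMeasure (radMeasure n m) := by rw [radMeasure_eq_pi]; infer_instance
  simp only [era, mcera_eq_sum_rademacherSup, integral_const_mul]
  rw [integral_finsetSum _ fun _ _ => .of_finite]
  simp only [integral_row, Finset.sum_const, Finset.card_univ, Fintype.card_fin, nsmul_eq_mul]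
  field_simp

theorem zhat_nonneg : 0 ≤ zhat f S :=
  Real.iSup_nonneg fun _ => abs_nonneg _

theorem sigma2hat_nonneg : 0 ≤ sigma2hat f S :=
  mul_nonneg (inv_nonneg.2 m.cast_nonneg)
    (Real.iSup_nonneg fun _ => Finset.sum_nonneg fun _ _ => sq_nonneg _)

variable {f S}

theorem abs_le_zhat (hbdd : BddAbove (Set.range fun p : ι × Fin m => |f p.1 (S p.2)|)) (l : ι)
    (k : Fin m) : |f l (S k)| ≤ zhat f S :=
  le_ciSup hbdd (l, k)

theorem sum_sq_le_mul_sigma2hat (hm : 0 < m)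
    (hbdd : BddAbove (Set.range fun p : ι × Fin m => |f p.1 (S p.2)|)) (l : ι) :
    ∑ k, f l (S k) ^ 2 ≤ m * sigma2hat f S := by
  have bddAbove_sum_sq : BddAbove (Set.range fun l => ∑ k, f l (S k) ^ 2) := by
    refine ⟨∑ _k : Fin m, zhat f S ^ 2, Set.forall_mem_range.2 fun l =>
      Finset.sum_le_sum fun k _ => ?_⟩
    exact sq_abs (f l (S k)) ▸ pow_le_pow_left₀ (abs_nonneg _) (abs_le_zhat hbdd l k) 2
  rw [sigma2hat, mul_inv_cancel_left₀ (Nat.cast_ne_zero.2 hm.ne')]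
  exact le_ciSup bddAbove_sum_sq l

theorem zhat_eq_zero_of_sigma2hat_eq_zero (hm : 0 < m)
    (hbdd : BddAbove (Set.range fun p : ι × Fin m => |f p.1 (S p.2)|))
    (hσ : sigma2hat f S = 0) : zhat f S = 0 := by
  refine le_antisymm (Real.iSup_le (fun ⟨l, k⟩ => ?_) le_rfl) (zhat_nonneg f S)
  have sq_le : f l (S k) ^ 2 ≤ 0 :=
    calc f l (S k) ^ 2 ≤ ∑ k, f l (S k) ^ 2 :=
          Finset.single_le_sum (fun k _ => sq_nonneg (f l (S k))) (Finset.mem_univ k)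
      _ ≤ m * sigma2hat f S := sum_sq_le_mul_sigma2hat hm hbdd l
      _ = 0 := by rw [hσ, mul_zero]
  simp [(sq_nonpos_iff _).1 sq_le]

end SampleQuantities

theorem neg_div_bernstein_le {N ε R z v : ℝ} (hN : 0 ≤ N) (hz : 0 ≤ z) (hv : 0 ≤ v) (hε : 0 < ε)
    (hεR : ε ≤ R) : -N / (2 * (z * ε + 2 * v)) ≤ -N / (4 * (z * R + v)) := by
  rcases (by positivity : 0 ≤ z * ε + 2 * v).eq_or_lt with h | h
  · obtain ⟨hzε, hv₀⟩ := (add_eq_zero_iff_of_nonneg (by positivity) (by positivity)).1 h.symm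
    obtain rfl : z = 0 := by simpa [hε.ne'] using hzε
    obtain rfl : v = 0 := by simpa using hv₀
    simp
  · rw [neg_div, neg_div, neg_le_neg_iff]
    refine div_le_div_of_nonneg_left hN (by positivity) ?_
    linarith [mul_le_mul_of_nonneg_left hεR hz, mul_nonneg hz hε.le]

theorem era_ge_mcera_add_iff {X ι : Type*} {f : ι → X → ℝ} {n m : ℕ} {S : Fin m → X} {ε : ℝ}
    (hn : 0 < n) (hm : 0 < m) (σ : Fin n → Fin m → Bool) :
    era f n m S ≥ mcera f n m S σ + ε ↔
      Fintype.card (Fin n) * ((uniformMeasure (Fin m → Bool))[fun τ =>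
        -rademacherSup (fun l k => f l (S k)) τ] + m * ε) ≤
        ∑ j, -rademacherSup (fun l k => f l (S k)) (σ j) := by
  have hn' : (0 : ℝ) < n := by exact_mod_cast hn
  have hm' : (0 : ℝ) < m := by exact_mod_cast hm
  rw [ge_iff_le, ← le_sub_iff_add_le, mcera_eq_sum_rademacherSup, inv_mul_le_iff₀ hn',
    inv_mul_le_iff₀ hm', era_eq_integral_rademacherSup f S hn, integral_neg,
    Finset.sum_neg_distrib, le_neg, Fintype.card_fin]
  refine iff_of_eq (congrArg _ ?_)
  field_simp
  ring

theorem stmt_6_general {X ι : Type*} [Nonempty ι] (f : ι → X → ℝ) (n m : ℕ) (hn : 0 < n)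
    (hm : 0 < m) (S : Fin m → X)
    (hbdd : BddAbove (Set.range fun p : ι × Fin m => |f p.1 (S p.2)|)) (ε : ℝ) (hε : 0 < ε) :
    (radMeasure n m
        {σ : Fin n → Fin m → Bool | era f n m S ≥ mcera f n m S σ + ε}).toReal ≤
      exp (-((n : ℝ) * m * ε ^ 2) / (2 * (zhat f S * ε + 2 * sigma2hat f S))) := by
  rw [radMeasure_eq_pi]
  rcases (sigma2hat_nonneg f S).eq_or_lt with hσ | hσ
  · -- The denominator vanishes, and division by zero turns the bound into `exp 0 = 1`.
    simpa [← hσ, zhat_eq_zero_of_sigma2hat_eq_zero hm hbdd hσ.symm] using! measureReal_le_one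
  have hm' : (0 : ℝ) < m := by exact_mod_cast hm
  have tail := (isSubGamma_neg_rademacherSup (abs_le_zhat hbdd)
    (sum_sq_le_mul_sigma2hat hm hbdd)).measureReal_le_sum_eval_le (ι := Fin n) .of_discrete
    (by positivity) (zhat_nonneg f S) (mul_pos hm' hε)
  simp only [← era_ge_mcera_add_iff hn hm] at tail
  refine tail.trans_eq (congrArg exp ?_)
  rw [Fintype.card_fin]
  field_simp
  ring

theorem stmt_6 {X : Type*} [MeasurableSpace X] {ι : Type*} [Countable ι]
    (f : ι → X → ℝ) (a b : ℝ) (ha : a ≤ 0) (hb : 0 < b)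
    (hmeas : ∀ l : ι, Measurable (f l))
    (hrange : ∀ (l : ι) (x : X), f l x ∈ Set.Icc a b)
    (hzero : ∃ l₀ : ι, ∀ x : X, f l₀ x = 0)
    (n m : ℕ) (hn : 0 < n) (hm : 0 < m) (S : Fin m → X)
    (ε : ℝ) (hε0 : 0 < ε) (hε : ε ≤ era f n m S) :
    (radMeasure n m
        {σ : Fin n → Fin m → Bool | era f n m S ≥ mcera f n m S σ + ε}).toReal ≤
      Real.exp (-((n : ℝ) * (m : ℝ) * ε ^ 2) /
        (4 * (zhat f S * era f n m S + sigma2hat f S))) := by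
  have : Nonempty ι := hzero.nonempty
  have hbdd : BddAbove (Set.range fun p : ι × Fin m => |f p.1 (S p.2)|) :=
    ⟨max |a| |b|, Set.forall_mem_range.2 fun _ => abs_le_max_abs_abs (hrange _ _).1 (hrange _ _).2⟩
  exact (stmt_6_general f n m hn hm S hbdd ε hε0).trans <| exp_le_exp.2 <|
    neg_div_bernstein_le (by positivity) (zhat_nonneg f S) (sigma2hat_nonneg f S) hε0 hε
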